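/- Let q be a norm on ℙ(ℂ^N) that is spectral admissible with respect to a spectral, submultiplicative norm q_σ with m(q_σ) < ∞. If there exists M > 0 such that q(∂P/∂x_j) ≤ M (deg P)^{m(q_σ)} q(P) for every j ∈ {1,…,N} and every polynomial P with deg P ≥ 1, then the exponent m(q_σ) is best possible for q; that is, m(q) = m(q_σ). -/

import Mathlib

open MvPolynomial Filter
open scoped ENNReal

/-- The partial-derivative operator `D^α = ∂^{|α|}/∂x₁^{α₁}⋯∂x_N^{α_N}` on
polynomials in `N` variables. -/
noncomputable def mvDeriv {N : ℕ} (α : Fin N → ℕ) (P : MvPolynomial (Fin N) ℂ) :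
    MvPolynomial (Fin N) ℂ :=
  (List.ofFn fun j : Fin N =>
      (fun Q : MvPolynomial (Fin N) ℂ => MvPolynomial.pderiv j Q)^[α j]).foldl
    (fun Q f => f Q) P

/-- `q` is a norm on the complex vector space `ℙ(ℂ^N)` of polynomials. -/
structure IsPolyNorm {N : ℕ} (q : MvPolynomial (Fin N) ℂ → ℝ) : Prop where
  nonneg : ∀ P, 0 ≤ q P
  definite : ∀ P, q P = 0 → P = 0
  triangle : ∀ P Q, q (P + Q) ≤ q P + q Q
  homog : ∀ (c : ℂ) (P), q (c • P) = ‖c‖ * q P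

/-- The Markov exponent `m(α, q) ∈ [0,∞]`: the infimum of the set of `s > 0` such that
`q(D^α P) ≤ M (deg P)^s q(P)` holds for some `M > 0` and all `P` with `deg P ≥ 1`
(`sInf ∅ = ∞` in `ℝ≥0∞`). -/
noncomputable def mExp {N : ℕ} (q : MvPolynomial (Fin N) ℂ → ℝ) (α : Fin N → ℕ) : ℝ≥0∞ :=
  sInf (ENNReal.ofReal '' {s : ℝ | 0 < s ∧ ∃ M : ℝ, 0 < M ∧
    ∀ P : MvPolynomial (Fin N) ℂ, 1 ≤ P.totalDegree →
      q (mvDeriv α P) ≤ M * (P.totalDegree : ℝ) ^ s * q P})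

/-- `m_k(q) = max {m(α,q) : |α| = k}`. -/
noncomputable def mkExp {N : ℕ} (q : MvPolynomial (Fin N) ℂ → ℝ) (k : ℕ) : ℝ≥0∞ :=
  ⨆ α ∈ {α : Fin N → ℕ | ∑ j, α j = k}, mExp q α

/-- The asymptotic Markov exponent `m*(q) = limsup_k m_k(q)/k`. -/
noncomputable def mStar {N : ℕ} (q : MvPolynomial (Fin N) ℂ → ℝ) : ℝ≥0∞ :=
  Filter.atTop.limsup fun k : ℕ => mkExp q k / (k : ℝ≥0∞)

/-!
Let `D` be a derivation of a commutative ring. If one copy of `f` is frozen to a constant `c`, then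
`D^n ((f - c)^n) = n! (D f)^n` at `c = f`, and expanding `(f - c)^n` gives
`n! (D f)^n = ∑ j, n.choose j * (-f)^(n - j) * D^n (f^j)`.
For a spectral norm this bounds `(q_σ(D f))^n` by the growth of `D^n` on polynomials of degree at
most `n * deg f`; passing from `q_σ` to `q` and back costs a factor `(deg f)^(a + b)`, of which only
the `n`-th root survives. So every exponent `s` for `q` yields the exponent `s + (a + b) / n` for
`q_σ`, and `n → ∞` gives `m(q_σ) ≤ m(q)`.
-/

section Derivation

variable {R A : Type*} [CommRing R] [CommRing A] [Algebra R A] (D : Derivation R A A)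

theorem dvd_iterate_derivation_pow_mul_sub (f : A) (n : ℕ) :
    ∀ g : A, f ∣ D^[n] (f ^ n * g) - n.factorial * D f ^ n * g := by
  induction n with
  | zero => simp
  | succ n ih =>
    intro g
    have hD : D (f ^ (n + 1) * g) = f ^ n * ((n + 1) * D f * g + f * D g) := by
      simp only [Derivation.leibniz, Derivation.leibniz_pow, smul_eq_mul, nsmul_eq_mul,
        Nat.add_sub_cancel, Nat.cast_add, Nat.cast_one]
      ring
    obtain ⟨r, hr⟩ := ih ((n + 1) * D f * g + f * D g)
    refine ⟨r + n.factorial * D f ^ n * D g, ?_⟩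
    rw [Function.iterate_succ_apply, hD, Nat.factorial_succ]
    push_cast
    linear_combination hr

open scoped Polynomial in
theorem factorial_mul_derivation_pow (f : A) (n : ℕ) :
    n.factorial * D f ^ n =
      ∑ j ∈ Finset.range (n + 1), n.choose j * (-f) ^ (n - j) * D^[n] (f ^ j) := by
  let _ : Differential A := ⟨D.restrictScalars ℤ⟩
  -- The indeterminate plays the frozen copy of `f`: the coefficientwise derivation kills it.
  let E : Derivation ℤ A[X] A[X] := Differential.mapCoeffs
  have hE_C (a : A) : E (Polynomial.C a) = Polynomial.C (D a) := Differential.mapCoeffs_C a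
  have hE_X : E Polynomial.X = 0 := Differential.mapCoeffs_X
  have hE_iterate (r : A[X]) (hr : E r = 0) (a : A) :
      ∀ k : ℕ, E^[k] (r * Polynomial.C a) = r * Polynomial.C (D^[k] a) := by
    intro k
    induction k with
    | zero => rfl
    | succ k ih => simp [Function.iterate_succ_apply', ih, hE_C, hr]
  have hE_coeff (m j : ℕ) : E ((m : A[X]) * (-Polynomial.X) ^ j) = 0 := by
    simp [Derivation.leibniz_pow, hE_X]
  have h_expand : E^[n] ((Polynomial.C f - Polynomial.X) ^ n) =
      ∑ j ∈ Finset.range (n + 1),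
        (n.choose j : A[X]) * (-Polynomial.X) ^ (n - j) * Polynomial.C (D^[n] (f ^ j)) := by
    rw [sub_eq_add_neg, add_pow, ← Derivation.coeFn_coe, ← Module.End.coe_pow, map_sum]
    refine Finset.sum_congr rfl fun j _ => ?_
    rw [Module.End.coe_pow, Derivation.coeFn_coe, ← hE_iterate _ (hE_coeff _ _), map_pow]
    congr 1
    ring
  obtain ⟨r, hr⟩ := dvd_iterate_derivation_pow_mul_sub E (Polynomial.C f - Polynomial.X) n 1
  have h_eval := congrArg (Polynomial.eval f) hr
  refine (sub_eq_zero.mp ?_).symm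
  simpa [h_expand, hE_C, hE_X, Polynomial.eval_finsetSum] using h_eval

end Derivation

theorem map_pow_le_pow_of_isPowMul {M : Type*} [Monoid M] {p : M → ℝ} (hp : IsPowMul p) (x : M)
    (n : ℕ) : p (x ^ n) ≤ p x ^ n := by
  rcases Nat.eq_zero_or_pos n with rfl | hn
  · simpa using hp.map_one_le_one
  · exact (hp x hn).le

theorem factorial_mul_map_derivation_pow_le {𝕜 B : Type*} [RCLike 𝕜] [CommRing B] [Algebra 𝕜 B]
    {p : Seminorm 𝕜 B} (hpow : IsPowMul p) (hmul : ∀ x y, p (x * y) ≤ p x * p y)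
    (D : Derivation 𝕜 B B) {n : ℕ} (hn : 1 ≤ n) {f : B} {K : ℝ}
    (hK : ∀ j ≤ n, p (D^[n] (f ^ j)) ≤ K * p f ^ j) :
    n.factorial * p (D f) ^ n ≤ 2 ^ n * K * p f ^ n := by
  have h_natCast (m : ℕ) (x : B) : p (m * x) = m * p x := by
    rw [← nsmul_eq_mul, ← Nat.cast_smul_eq_nsmul 𝕜, map_smul_eq_mul, RCLike.norm_natCast]
  have h_term : ∀ j ∈ Finset.range (n + 1),
      p (n.choose j * (-f) ^ (n - j) * D^[n] (f ^ j)) ≤ n.choose j * (K * p f ^ n) := by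
    intro j hj
    have hj : j ≤ n := Finset.mem_range_succ_iff.mp hj
    rw [mul_assoc, h_natCast]
    gcongr
    calc p ((-f) ^ (n - j) * D^[n] (f ^ j))
        ≤ p ((-f) ^ (n - j)) * p (D^[n] (f ^ j)) := hmul _ _
      _ ≤ p f ^ (n - j) * (K * p f ^ j) := by
        gcongr
        · exact (map_pow_le_pow_of_isPowMul hpow _ _).trans_eq (by rw [map_neg_eq_map])
        · exact hK j hj
      _ = K * p f ^ n := by rw [mul_left_comm, pow_sub_mul_pow _ hj]
  calc n.factorial * p (D f) ^ n
      = p (∑ j ∈ Finset.range (n + 1), n.choose j * (-f) ^ (n - j) * D^[n] (f ^ j)) := by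
        rw [← factorial_mul_derivation_pow, h_natCast, hpow _ hn]
    _ ≤ ∑ j ∈ Finset.range (n + 1), p (n.choose j * (-f) ^ (n - j) * D^[n] (f ^ j)) :=
        Finset.le_sum_of_subadditive p (map_zero p).le (map_add_le_add p) _ _
    _ ≤ ∑ j ∈ Finset.range (n + 1), n.choose j * (K * p f ^ n) := Finset.sum_le_sum h_term
    _ = 2 ^ n * K * p f ^ n := by
        rw [← Finset.sum_mul, ← Nat.cast_sum, Nat.sum_range_choose, Nat.cast_pow, Nat.cast_ofNat,
          mul_assoc]

/-- The map `T` grows at most like the power `s` of the degree, from the norm `q` to the norm `p`: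
`p (T P) ≤ C * d ^ s * q P` whenever `P` has degree at most `d`. With `T = id` this compares two
norms, with `T = pderiv j` and `p = q` it is Markov's inequality. Quantifying over the bounds
`d ≥ 1` instead of using `P.totalDegree` makes the bound meaningful for constant polynomials, where
the factor `0 ^ s` would vanish. -/
def HasDegreeGrowth {σ R : Type*} [CommSemiring R] (p q : MvPolynomial σ R → ℝ)
    (T : MvPolynomial σ R → MvPolynomial σ R) (s : ℝ) : Prop :=
  ∃ C : ℝ, 0 < C ∧ ∀ (P : MvPolynomial σ R) (d : ℕ), 1 ≤ d → P.totalDegree ≤ d →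
    p (T P) ≤ C * (d : ℝ) ^ s * q P

namespace HasDegreeGrowth

section CommSemiring

variable {σ R : Type*} [CommSemiring R] {p q r : MvPolynomial σ R → ℝ}
  {T U : MvPolynomial σ R → MvPolynomial σ R} {s t : ℝ}

theorem mono (h : HasDegreeGrowth p q T s) (hq : ∀ P, 0 ≤ q P) (hst : s ≤ t) :
    HasDegreeGrowth p q T t := by
  obtain ⟨C, hC, h⟩ := h
  refine ⟨C, hC, fun P d hd hP => (h P d hd hP).trans ?_⟩
  have hd' : (1 : ℝ) ≤ d := by exact_mod_cast hd
  have := hq P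
  gcongr

theorem comp (hT : HasDegreeGrowth p q T s) (hU : HasDegreeGrowth q r U t)
    (hdeg : ∀ P, (U P).totalDegree ≤ P.totalDegree) :
    HasDegreeGrowth p r (T ∘ U) (s + t) := by
  obtain ⟨C, hC, hT⟩ := hT
  obtain ⟨C', hC', hU⟩ := hU
  refine ⟨C * C', by positivity, fun P d hd hP => ?_⟩
  have hd' : (0 : ℝ) < d := by exact_mod_cast hd
  calc p (T (U P)) ≤ C * (d : ℝ) ^ s * q (U P) := hT _ d hd ((hdeg P).trans hP)
    _ ≤ C * (d : ℝ) ^ s * (C' * (d : ℝ) ^ t * r P) := by gcongr; exact hU P d hd hP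
    _ = C * C' * (d : ℝ) ^ (s + t) * r P := by rw [Real.rpow_add hd']; ring

theorem iterate (hT : HasDegreeGrowth q q T s) (hdeg : ∀ P, (T P).totalDegree ≤ P.totalDegree)
    (n : ℕ) : HasDegreeGrowth q q T^[n] (n * s) := by
  induction n with
  | zero => exact ⟨1, one_pos, by simp⟩
  | succ n ih => simpa [Function.iterate_succ, add_mul] using ih.comp hT hdeg

end CommSemiring

variable {σ 𝕜 : Type*} {s : ℝ}

theorem of_one_le_totalDegree [NormedField 𝕜] {p q : Seminorm 𝕜 (MvPolynomial σ 𝕜)} (hq : q 1 ≠ 0)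
    (T : MvPolynomial σ 𝕜 →ₗ[𝕜] MvPolynomial σ 𝕜) (hs : 0 ≤ s) {C : ℝ} (hC : 0 < C)
    (h : ∀ P : MvPolynomial σ 𝕜, 1 ≤ P.totalDegree →
      p (T P) ≤ C * (P.totalDegree : ℝ) ^ s * q P) :
    HasDegreeGrowth p q T s := by
  refine ⟨max C (p (T 1) / q 1), lt_max_of_lt_left hC, fun P d hd hP => ?_⟩
  have hd' : (1 : ℝ) ≤ d := by exact_mod_cast hd
  rcases Nat.eq_zero_or_pos P.totalDegree with hP0 | hP0
  · obtain ⟨c, rfl⟩ : ∃ c : 𝕜, P = c • 1 :=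
      ⟨coeff 0 P, by rw [smul_eq_C_mul, mul_one, ← totalDegree_eq_zero_iff_eq_C, hP0]⟩
    calc p (T (c • 1)) = p (T 1) / q 1 * 1 * q (c • 1) := by
          simp only [map_smul, map_smul_eq_mul]
          field_simp
      _ ≤ max C (p (T 1) / q 1) * (d : ℝ) ^ s * q (c • 1) := by
          gcongr
          · exact le_max_right _ _
          · exact Real.one_le_rpow hd' hs
  · refine (h P hP0).trans ?_
    gcongr
    exact le_max_left _ _

variable [RCLike 𝕜] {p q : Seminorm 𝕜 (MvPolynomial σ 𝕜)}
  {D : Derivation 𝕜 (MvPolynomial σ 𝕜) (MvPolynomial σ 𝕜)}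

theorem derivation_of_iterate (hpow : IsPowMul p) (hmul : ∀ P Q, p (P * Q) ≤ p P * p Q) {n : ℕ}
    (hn : 1 ≤ n) (h : HasDegreeGrowth p p D^[n] s) : HasDegreeGrowth p p D (s / n) := by
  obtain ⟨C, hC, h⟩ := h
  have hn0 : n ≠ 0 := by lia
  refine ⟨(2 ^ n * C * (n : ℝ) ^ s) ^ (n⁻¹ : ℝ), by positivity, fun P d hd hP => ?_⟩
  have hK : ∀ j ≤ n, p (D^[n] (P ^ j)) ≤ C * (n * d : ℝ) ^ s * p P ^ j := by
    intro j hj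
    have hdeg : (P ^ j).totalDegree ≤ n * d := (totalDegree_pow P j).trans (Nat.mul_le_mul hj hP)
    calc p (D^[n] (P ^ j)) ≤ C * (n * d : ℝ) ^ s * p (P ^ j) := by
          exact_mod_cast h _ _ (Nat.mul_pos hn hd) hdeg
      _ ≤ C * (n * d : ℝ) ^ s * p P ^ j := by gcongr; exact map_pow_le_pow_of_isPowMul hpow P j
  refine le_of_pow_le_pow_left₀ hn0 (by positivity) ?_
  calc p (D P) ^ n ≤ n.factorial * p (D P) ^ n :=
        le_mul_of_one_le_left (by positivity) (mod_cast n.factorial_pos)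
    _ ≤ 2 ^ n * (C * (n * d : ℝ) ^ s) * p P ^ n :=
        factorial_mul_map_derivation_pow_le hpow hmul D hn hK
    _ = ((2 ^ n * C * (n : ℝ) ^ s) ^ (n⁻¹ : ℝ) * (d : ℝ) ^ (s / n) * p P) ^ n := by
        rw [mul_pow, mul_pow, Real.rpow_inv_natCast_pow (by positivity) hn0,
          ← Real.rpow_mul_natCast d.cast_nonneg, div_mul_cancel₀ s (by positivity),
          Real.mul_rpow n.cast_nonneg d.cast_nonneg]
        ring

theorem derivation_of_spectral (hpow : IsPowMul p) (hmul : ∀ P Q, p (P * Q) ≤ p P * p Q) {a b : ℝ}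
    (hpq : HasDegreeGrowth p q id a) (hqp : HasDegreeGrowth q p id b)
    (hdeg : ∀ P, (D P).totalDegree ≤ P.totalDegree) (h : HasDegreeGrowth q q D s) {n : ℕ}
    (hn : 1 ≤ n) : HasDegreeGrowth p p D (s + (a + b) / n) := by
  have h_deg_iterate (P : MvPolynomial σ 𝕜) : (D^[n] P).totalDegree ≤ P.totalDegree :=
    Function.Iterate.rec (fun Q => Q.totalDegree ≤ P.totalDegree) le_rfl (fun Q => (hdeg Q).trans) n
  have h_iterate : HasDegreeGrowth p p D^[n] (a + n * s + b) :=
    (hpq.comp (h.iterate hdeg n) h_deg_iterate).comp hqp fun _ => le_rfl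
  have hn0 : (n : ℝ) ≠ 0 := by positivity
  convert derivation_of_iterate hpow hmul hn h_iterate using 1
  field_simp
  ring

end HasDegreeGrowth

theorem totalDegree_pderiv_le {σ R : Type*} [CommSemiring R] (j : σ) (P : MvPolynomial σ R) :
    (pderiv j P).totalDegree ≤ P.totalDegree := by
  conv_lhs => rw [P.as_sum, map_sum]
  refine totalDegree_finsetSum_le fun m hm => ?_
  rw [pderiv_monomial]
  exact (totalDegree_monomial_le _ _).trans
    ((Finsupp.degree_mono tsub_le_self).trans (le_totalDegree hm))

theorem foldl_iterate_single {ι X : Type*} [DecidableEq ι] (g : ι → X → X) (j : ι) {l : List ι}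
    (hl : l.Nodup) (x : X) :
    l.foldl (fun y i => (g i)^[(Pi.single j 1 : ι → ℕ) i] y) x = if j ∈ l then g j x else x := by
  induction l generalizing x with
  | nil => simp
  | cons i l ih =>
    obtain ⟨hi, hl⟩ := List.nodup_cons.mp hl
    rw [List.foldl_cons, ih hl]
    rcases eq_or_ne i j with rfl | hij
    · simp [hi]
    · simp [hij, hij.symm]

theorem exists_eq_single_of_sum_eq_one {ι : Type*} [Fintype ι] [DecidableEq ι] {α : ι → ℕ}
    (h : ∑ i, α i = 1) : ∃ i, α = Pi.single i 1 := by
  obtain ⟨i, hi⟩ := (Finsupp.sum_eq_one_iff (Finsupp.equivFunOnFinite.symm α)).mp <| by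
    rwa [Finsupp.sum_fintype _ _ fun _ => rfl]
  exact ⟨i, by rw [← Finsupp.single_eq_pi_single, ← hi]; rfl⟩

section MarkovExponent

variable {N : ℕ} {q qσ : MvPolynomial (Fin N) ℂ → ℝ} {s : ℝ}

theorem mvDeriv_single (j : Fin N) (P : MvPolynomial (Fin N) ℂ) :
    mvDeriv (Pi.single j 1) P = pderiv j P := by
  rw [mvDeriv, List.ofFn_eq_map, List.foldl_map,
    foldl_iterate_single (fun i => pderiv i) j (List.nodup_finRange N),
    if_pos (List.mem_finRange j)]

theorem mkExp_one (q : MvPolynomial (Fin N) ℂ → ℝ) :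
    mkExp q 1 = ⨆ j, mExp q (Pi.single j 1) := by
  refine le_antisymm (iSup₂_le fun α hα => ?_) (iSup_le fun j => ?_)
  · obtain ⟨j, rfl⟩ := exists_eq_single_of_sum_eq_one hα
    exact le_iSup (fun j => mExp q (Pi.single j 1)) j
  · exact le_iSup₂_of_le (Pi.single j 1) (by simp) le_rfl

/-- A polynomial norm as a seminorm, which gives access to the library's lemmas. -/
noncomputable def IsPolyNorm.toSeminorm (hq : IsPolyNorm q) : Seminorm ℂ (MvPolynomial (Fin N) ℂ) :=
  Seminorm.of q hq.triangle hq.homog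

theorem IsPolyNorm.map_one_ne_zero (hq : IsPolyNorm q) : q 1 ≠ 0 :=
  fun h => one_ne_zero (hq.definite 1 h)

theorem HasDegreeGrowth.mkExp_one_le (hq : ∀ P, 0 ≤ q P)
    (h : ∀ j, HasDegreeGrowth q q (pderiv j) s) : mkExp q 1 ≤ ENNReal.ofReal s := by
  rw [mkExp_one]
  refine iSup_le fun j => le_of_forall_gt fun c hc => ?_
  obtain ⟨t, -, hst, htc⟩ := ENNReal.lt_iff_exists_real_btwn.mp hc
  obtain ⟨hst, ht⟩ := ENNReal.ofReal_lt_ofReal_iff'.mp hst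
  obtain ⟨C, hC, hP⟩ := (h j).mono hq hst.le
  refine lt_of_le_of_lt (sInf_le ⟨t, ⟨ht, C, hC, fun P hd => ?_⟩, rfl⟩) htc
  simpa only [mvDeriv_single] using hP P _ hd le_rfl

theorem hasDegreeGrowth_pderiv_of_mkExp_one_lt (hq : IsPolyNorm q)
    (h : mkExp q 1 < ENNReal.ofReal s) (j : Fin N) : HasDegreeGrowth q q (pderiv j) s := by
  rw [mkExp_one] at h
  obtain ⟨_, ⟨t, ⟨ht, C, hC, hP⟩, rfl⟩, hts⟩ := sInf_lt_iff.mp ((le_iSup _ j).trans_lt h)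
  have h_growth : HasDegreeGrowth q q (pderiv j) t :=
    .of_one_le_totalDegree (p := hq.toSeminorm) (q := hq.toSeminorm) hq.map_one_ne_zero
      (pderiv j).toLinearMap ht.le hC fun P hd => mvDeriv_single j P ▸ hP P hd
  exact h_growth.mono hq.nonneg ((ENNReal.ofReal_lt_ofReal_iff_of_nonneg ht.le).mp hts).le

theorem mkExp_one_le_of_spectral (hq : IsPolyNorm q) (hqσ : IsPolyNorm qσ) (hpow : IsPowMul qσ)
    (hmul : ∀ P Q, qσ (P * Q) ≤ qσ P * qσ Q) {a b : ℝ}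
    (hup : HasDegreeGrowth qσ q id a) (hdown : HasDegreeGrowth q qσ id b) :
    mkExp qσ 1 ≤ mkExp q 1 := by
  refine le_of_forall_gt fun c hc => ?_
  obtain ⟨s, -, hs, hsc⟩ := ENNReal.lt_iff_exists_real_btwn.mp hc
  have h_bound : ∀ n : ℕ, 1 ≤ n → mkExp qσ 1 ≤ ENNReal.ofReal (s + (a + b) / n) := fun n hn =>
    HasDegreeGrowth.mkExp_one_le hqσ.nonneg fun j =>
      HasDegreeGrowth.derivation_of_spectral (p := hqσ.toSeminorm) (q := hq.toSeminorm) hpow hmul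
        hup hdown (totalDegree_pderiv_le j) (hasDegreeGrowth_pderiv_of_mkExp_one_lt hq hs j) hn
  have h_lim : Tendsto (fun n : ℕ => ENNReal.ofReal (s + (a + b) / n)) atTop
      (nhds (ENNReal.ofReal s)) := by
    refine (ENNReal.continuous_ofReal.tendsto s).comp ?_
    simpa using (tendsto_const_div_atTop_nhds_zero_nat (a + b)).const_add s
  exact (ge_of_tendsto h_lim (eventually_atTop.mpr ⟨1, h_bound⟩)).trans_lt hsc

end MarkovExponent

/-- Let `q` be spectral admissible with respect to a spectral,
submultiplicative norm `q_σ` with `m(q_σ) < ∞`. If Markov's inequality for `q` holds with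
the exponent `m(q_σ)` (for all coordinate derivatives), then this exponent is best possible:
`m(q) = m(q_σ)`. -/
theorem statement6 {N : ℕ} (q qσ : MvPolynomial (Fin N) ℂ → ℝ)
    (hq : IsPolyNorm q) (hqσ : IsPolyNorm qσ)
    (hspec : ∀ (P : MvPolynomial (Fin N) ℂ) (n : ℕ), 1 ≤ n → qσ (P ^ n) = qσ P ^ n)
    (hsub : ∀ P Q : MvPolynomial (Fin N) ℂ, qσ (P * Q) ≤ qσ P * qσ Q)
    (A B a b : ℝ) (hA : 0 < A) (hB : 0 < B) (ha : 0 ≤ a) (hb : 0 ≤ b)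
    (hup : ∀ P : MvPolynomial (Fin N) ℂ, 1 ≤ P.totalDegree →
      qσ P ≤ A * (P.totalDegree : ℝ) ^ a * q P)
    (hdown : ∀ P : MvPolynomial (Fin N) ℂ, 1 ≤ P.totalDegree →
      q P ≤ B * (P.totalDegree : ℝ) ^ b * qσ P)
    (hfin : mkExp qσ 1 ≠ ⊤)
    (M : ℝ) (hM : 0 < M)
    (hmar : ∀ (j : Fin N) (P : MvPolynomial (Fin N) ℂ), 1 ≤ P.totalDegree →
      q (MvPolynomial.pderiv j P) ≤ M * (P.totalDegree : ℝ) ^ (mkExp qσ 1).toReal * q P) :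
    mkExp q 1 = mkExp qσ 1 := by
  have h_markov (j : Fin N) : HasDegreeGrowth q q (pderiv j) (mkExp qσ 1).toReal :=
    .of_one_le_totalDegree (p := hq.toSeminorm) (q := hq.toSeminorm) hq.map_one_ne_zero
      (pderiv j).toLinearMap ENNReal.toReal_nonneg hM (hmar j)
  have h_up : HasDegreeGrowth qσ q id a :=
    .of_one_le_totalDegree (p := hqσ.toSeminorm) (q := hq.toSeminorm) hq.map_one_ne_zero
      LinearMap.id ha hA hup
  have h_down : HasDegreeGrowth q qσ id b :=
    .of_one_le_totalDegree (p := hq.toSeminorm) (q := hqσ.toSeminorm) hqσ.map_one_ne_zero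
      LinearMap.id hb hB hdown
  refine le_antisymm ?_ (mkExp_one_le_of_spectral hq hqσ (fun P n => hspec P n) hsub h_up h_down)
  exact (HasDegreeGrowth.mkExp_one_le hq.nonneg h_markov).trans_eq (ENNReal.ofReal_toReal hfin)
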